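/- The map i from the group Q of block matrices [[p,0,s],[0,R,0],[0,0,q]] (blocks 1, n, 1; |p q det R| = 1) to GL(2n+2,ℝ), sending such a matrix to the block matrix (blocks of sizes 1, 1, n, n) [[sgn(q/p)·√|p/q|, sgn(q/p)·(s/p)·√|p/q|, 0, 0], [0, √|q/p|, 0, 0], [0, 0, q^{-1}√|q/p|·R, 0], [0, 0, 0, p·√|q/p|·(R^{-1})^T]], is an injective group homomorphism. -/

import Mathlib

/-- Index type for block decomposition of size 1, n, 1 (source side). -/
abbrev Idx (n : ℕ) := Unit ⊕ Fin n ⊕ Unit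

/-- Index type for block decomposition of sizes 1, 1, n, n (target side). -/
abbrev Jdx (n : ℕ) := Unit ⊕ Unit ⊕ Fin n ⊕ Fin n

/-- The linear map `α : sl(n+2,ℝ) → sl(2n+2,ℝ)` of the paper, written blockwise:
for `A = [[a,u,d],[x,B,v],[z,y,c]]` (blocks 1, n, 1),
`α(A) = [[(a−c)/2, d, u/2, vᵀ/2], [z, (c−a)/2, y/2, −xᵀ/2],
[x, v, B−((a+c)/2)·id, 0], [yᵀ, −uᵀ, 0, −Bᵀ+((a+c)/2)·id]]` (blocks 1, 1, n, n). -/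
noncomputable def alphaMap {n : ℕ} (A : Matrix (Idx n) (Idx n) ℝ) : Matrix (Jdx n) (Jdx n) ℝ :=
  Matrix.of fun i j =>
    match i, j with
    | Sum.inl _, Sum.inl _ =>
        (A (Sum.inl ()) (Sum.inl ()) - A (Sum.inr (Sum.inr ())) (Sum.inr (Sum.inr ()))) / 2
    | Sum.inl _, Sum.inr (Sum.inl _) => A (Sum.inl ()) (Sum.inr (Sum.inr ()))
    | Sum.inl _, Sum.inr (Sum.inr (Sum.inl k)) => A (Sum.inl ()) (Sum.inr (Sum.inl k)) / 2
    | Sum.inl _, Sum.inr (Sum.inr (Sum.inr k)) => A (Sum.inr (Sum.inl k)) (Sum.inr (Sum.inr ())) / 2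
    | Sum.inr (Sum.inl _), Sum.inl _ => A (Sum.inr (Sum.inr ())) (Sum.inl ())
    | Sum.inr (Sum.inl _), Sum.inr (Sum.inl _) =>
        (A (Sum.inr (Sum.inr ())) (Sum.inr (Sum.inr ())) - A (Sum.inl ()) (Sum.inl ())) / 2
    | Sum.inr (Sum.inl _), Sum.inr (Sum.inr (Sum.inl k)) =>
        A (Sum.inr (Sum.inr ())) (Sum.inr (Sum.inl k)) / 2
    | Sum.inr (Sum.inl _), Sum.inr (Sum.inr (Sum.inr k)) =>
        -(A (Sum.inr (Sum.inl k)) (Sum.inl ())) / 2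
    | Sum.inr (Sum.inr (Sum.inl k)), Sum.inl _ => A (Sum.inr (Sum.inl k)) (Sum.inl ())
    | Sum.inr (Sum.inr (Sum.inl k)), Sum.inr (Sum.inl _) =>
        A (Sum.inr (Sum.inl k)) (Sum.inr (Sum.inr ()))
    | Sum.inr (Sum.inr (Sum.inl k)), Sum.inr (Sum.inr (Sum.inl l)) =>
        A (Sum.inr (Sum.inl k)) (Sum.inr (Sum.inl l)) -
          (if k = l then (A (Sum.inl ()) (Sum.inl ()) +
            A (Sum.inr (Sum.inr ())) (Sum.inr (Sum.inr ()))) / 2 else 0)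
    | Sum.inr (Sum.inr (Sum.inl _)), Sum.inr (Sum.inr (Sum.inr _)) => 0
    | Sum.inr (Sum.inr (Sum.inr k)), Sum.inl _ => A (Sum.inr (Sum.inr ())) (Sum.inr (Sum.inl k))
    | Sum.inr (Sum.inr (Sum.inr k)), Sum.inr (Sum.inl _) => -(A (Sum.inl ()) (Sum.inr (Sum.inl k)))
    | Sum.inr (Sum.inr (Sum.inr _)), Sum.inr (Sum.inr (Sum.inl _)) => 0
    | Sum.inr (Sum.inr (Sum.inr k)), Sum.inr (Sum.inr (Sum.inr l)) =>
        -(A (Sum.inr (Sum.inl l)) (Sum.inr (Sum.inl k))) +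
          (if k = l then (A (Sum.inl ()) (Sum.inl ()) +
            A (Sum.inr (Sum.inr ())) (Sum.inr (Sum.inr ()))) / 2 else 0)

/-- The matrix `[[p,0,s],[0,R,0],[0,0,q]]` representing an element of `Q`. -/
noncomputable def qMat {n : ℕ} (p s q : ℝ) (R : Matrix (Fin n) (Fin n) ℝ) : Matrix (Idx n) (Idx n) ℝ :=
  Matrix.of fun i j =>
    match i, j with
    | Sum.inl _, Sum.inl _ => p
    | Sum.inl _, Sum.inr (Sum.inr _) => s
    | Sum.inr (Sum.inl k), Sum.inr (Sum.inl l) => R k l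
    | Sum.inr (Sum.inr _), Sum.inr (Sum.inr _) => q
    | _, _ => 0

/-- The map `i : Q → P̃` of the paper on representative matrices. -/
noncomputable def iMap {n : ℕ} (p s q : ℝ) (R : Matrix (Fin n) (Fin n) ℝ) :
    Matrix (Jdx n) (Jdx n) ℝ :=
  Matrix.of fun i j =>
    match i, j with
    | Sum.inl _, Sum.inl _ => Real.sign (q / p) * Real.sqrt |p / q|
    | Sum.inl _, Sum.inr (Sum.inl _) => Real.sign (q / p) * (s / p) * Real.sqrt |p / q|
    | Sum.inr (Sum.inl _), Sum.inr (Sum.inl _) => Real.sqrt |q / p|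
    | Sum.inr (Sum.inr (Sum.inl k)), Sum.inr (Sum.inr (Sum.inl l)) =>
        q⁻¹ * Real.sqrt |q / p| * R k l
    | Sum.inr (Sum.inr (Sum.inr k)), Sum.inr (Sum.inr (Sum.inr l)) =>
        p * Real.sqrt |q / p| * R⁻¹ l k
    | _, _ => 0

/-!
Since `sgn x / √|x| = √|x| / x`, the scalar `√|q/p|` factors out of `i(g)`, leaving the block matrix
with upper triangular block `q⁻¹ [[p, s], [0, q]]` and diagonal blocks `q⁻¹ R` and `p (R⁻¹)ᵀ`.
Both factors are visibly multiplicative. The entry `q⁻¹ q = 1` of the second factor recovers the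
scalar `√|q/p|` from `i(g)`, and the other entries then recover `q⁻¹ g`. So `i(g) = i(g')` makes `g`
a multiple of `g'`, and the ratio is `±1` because both determinants are `±1`.
-/

section GeneralMatrices

open Matrix

variable {k l m o α : Type*}

/-- The block matrix `[[A, B, 0, 0], [0, D, 0, 0], [0, 0, E, 0], [0, 0, 0, F]]`, the shape of the
elements in the image of `iMap`. The index type is associated to the right, to agree with `Jdx`. -/
def upperTriDiagBlocks [Zero α] (A : Matrix k k α) (B : Matrix k l α)
    (D : Matrix l l α) (E : Matrix m m α) (F : Matrix o o α) :
    Matrix (k ⊕ l ⊕ m ⊕ o) (k ⊕ l ⊕ m ⊕ o) α :=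
  fromBlocks A (fromCols B 0) 0 (fromBlocks D 0 0 (fromBlocks E 0 0 F))

theorem upperTriDiagBlocks_inj [Zero α] {A A' : Matrix k k α} {B B' : Matrix k l α}
    {D D' : Matrix l l α} {E E' : Matrix m m α} {F F' : Matrix o o α} :
    upperTriDiagBlocks A B D E F = upperTriDiagBlocks A' B' D' E' F' ↔
      A = A' ∧ B = B' ∧ D = D' ∧ E = E' ∧ F = F' := by
  simp [upperTriDiagBlocks, fromBlocks_inj, fromCols_ext_iff]

theorem upperTriDiagBlocks_mul [Fintype k] [Fintype l] [Fintype m] [Fintype o]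
    [NonUnitalNonAssocSemiring α]
    (A A' : Matrix k k α) (B B' : Matrix k l α) (D D' : Matrix l l α)
    (E E' : Matrix m m α) (F F' : Matrix o o α) :
    upperTriDiagBlocks A B D E F * upperTriDiagBlocks A' B' D' E' F' =
      upperTriDiagBlocks (A * A') (A * B' + B * D') (D * D') (E * E') (F * F') := by
  ext (i | i | i | i) (j | j | j | j) <;> simp [upperTriDiagBlocks, mul_apply]

theorem eq_or_eq_neg_of_eq_smul_of_abs_det_eq [Fintype m] [DecidableEq m] [Nonempty m]
    [CommRing α] [LinearOrder α] [IsStrictOrderedRing α] {A B : Matrix m m α} {c : α}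
    (hAB : A = c • B) (hdet : |A.det| = |B.det|) (hB : B.det ≠ 0) : A = B ∨ A = -B := by
  have hpow : |c| ^ Fintype.card m = 1 := by
    rwa [hAB, det_smul, abs_mul, abs_pow, mul_eq_right₀ (abs_ne_zero.mpr hB)] at hdet
  have habs : |c| = 1 := (pow_eq_one_iff_of_nonneg (abs_nonneg c) Fintype.card_ne_zero).mp hpow
  rcases eq_or_eq_neg_of_abs_eq habs with rfl | rfl
  · exact .inl (by rw [hAB, one_smul])
  · exact .inr (by rw [hAB, neg_one_smul])

end GeneralMatrices

theorem sign_mul_sqrt_abs_inv (x : ℝ) : Real.sign x * √|x⁻¹| = √|x| * x⁻¹ := by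
  rcases lt_trichotomy x 0 with hx | rfl | hx
  · rw [Real.sign_of_neg hx, abs_inv, Real.sqrt_inv, ← Real.sqrt_div_self, abs_of_neg hx]
    ring
  · simp
  · rw [Real.sign_of_pos hx, abs_inv, Real.sqrt_inv, ← Real.sqrt_div_self, abs_of_pos hx]
    ring

section BlockMatricesOfQ

open scoped Matrix

variable {n : ℕ}

theorem smul_qMat (c p s q : ℝ) (R : Matrix (Fin n) (Fin n) ℝ) :
    c • qMat p s q R = qMat (c * p) (c * s) (c * q) (c • R) := by
  ext (i | i | i) (j | j | j) <;> simp [qMat]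

theorem qMat_eq_fromBlocks (p s q : ℝ) (R : Matrix (Fin n) (Fin n) ℝ) :
    qMat p s q R = Matrix.fromBlocks (p • 1) (Matrix.fromCols 0 (s • 1)) 0
      (Matrix.fromBlocks R 0 0 (q • 1)) := by
  ext (i | i | i) (j | j | j) <;> simp [qMat]

theorem det_qMat (p s q : ℝ) (R : Matrix (Fin n) (Fin n) ℝ) :
    (qMat p s q R).det = p * q * R.det := by
  rw [qMat_eq_fromBlocks, Matrix.det_fromBlocks_zero₂₁, Matrix.det_fromBlocks_zero₂₁]
  simp only [Matrix.det_unique, Matrix.smul_apply, Matrix.one_apply_eq, smul_eq_mul, mul_one]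
  ring

theorem iMap_eq_smul_upperTriDiagBlocks (p s q : ℝ) (R : Matrix (Fin n) (Fin n) ℝ) :
    iMap p s q R = √|q / p| •
      upperTriDiagBlocks ((p / q) • 1) ((s / q) • 1) 1 (q⁻¹ • R) (p • R⁻¹ᵀ) := by
  have h_diag : Real.sign (q / p) * √|p / q| = √|q / p| * (p / q) := by
    simpa using sign_mul_sqrt_abs_inv (q / p)
  have h_upper : Real.sign (q / p) * (s / p) * √|p / q| = √|q / p| * (s / q) := by
    rcases eq_or_ne p 0 with rfl | hp
    · simp
    · rw [mul_right_comm, h_diag, mul_assoc, mul_comm (p / q), div_mul_div_cancel₀ hp]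
  ext (i | i | i | i) (j | j | j | j) <;>
    simp [iMap, upperTriDiagBlocks, h_diag, h_upper, mul_left_comm, mul_assoc]

theorem iMap_mul (p s q p' s' : ℝ) {q' : ℝ} (hq' : q' ≠ 0) (R R' : Matrix (Fin n) (Fin n) ℝ) :
    iMap (p * p') (p * s' + s * q') (q * q') (R * R') = iMap p s q R * iMap p' s' q' R' := by
  have h_upper : (p * s' + s * q') / (q * q') = p / q * (s' / q') + s / q := by
    rw [add_div, mul_div_mul_comm, mul_div_mul_right _ _ hq']
  have h_diag : p * p' / (q * q') = p / q * (p' / q') := mul_div_mul_comm ..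
  have h_sqrt : √|q * q' / (p * p')| = √|q / p| * √|q' / p'| := by
    rw [mul_div_mul_comm, abs_mul, Real.sqrt_mul (abs_nonneg _)]
  simp only [iMap_eq_smul_upperTriDiagBlocks, Matrix.smul_mul, Matrix.mul_smul, smul_smul,
    upperTriDiagBlocks_mul, h_sqrt, h_diag, h_upper, Matrix.mul_one, add_smul, mul_inv,
    Matrix.mul_inv_rev, Matrix.transpose_mul, mul_comm]

theorem qMat_eq_smul_of_iMap_eq {p s q p' s' q' : ℝ} {R R' : Matrix (Fin n) (Fin n) ℝ}
    (hp : p ≠ 0) (hq : q ≠ 0) (hq' : q' ≠ 0) (h : iMap p s q R = iMap p' s' q' R') :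
    qMat p s q R = (q / q') • qMat p' s' q' R' := by
  have h_sqrt : √|q / p| = √|q' / p'| := by
    simpa [iMap] using congr_fun₂ h (.inr (.inl ())) (.inr (.inl ()))
  have h_sqrt_ne : √|q / p| ≠ 0 := by simp [hp, hq]
  rw [iMap_eq_smul_upperTriDiagBlocks, iMap_eq_smul_upperTriDiagBlocks, ← h_sqrt] at h
  obtain ⟨hpq, hsq, -, hRq, -⟩ := upperTriDiagBlocks_inj.mp (smul_right_injective _ h_sqrt_ne h)
  have h_unit : (1 : Matrix Unit Unit ℝ) ≠ 0 := one_ne_zero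
  replace hpq : p / q = p' / q' := smul_left_injective ℝ h_unit hpq
  replace hsq : s / q = s' / q' := smul_left_injective ℝ h_unit hsq
  have hR : R = (q / q') • R' := by
    rw [div_eq_mul_inv, mul_smul, ← hRq, smul_inv_smul₀ hq]
  rw [smul_qMat, ← hR, div_mul_cancel₀ q hq', div_mul_comm, ← hpq, div_mul_cancel₀ p hq,
    div_mul_comm q q' s', ← hsq, div_mul_cancel₀ s hq]

end BlockMatricesOfQ

/-- the map `i : Q → PGL(2n+2,ℝ)` is an injective group homomorphism:
on representatives it is multiplicative, and two elements of `Q` with the same image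
agree up to sign (i.e. represent the same element of `PGL(n+2,ℝ)`). -/
theorem iMap_injective_group_hom (n : ℕ) (p s q p' s' q' : ℝ)
    (R R' : Matrix (Fin n) (Fin n) ℝ)
    (hp : p ≠ 0) (hq : q ≠ 0) (hp' : p' ≠ 0) (hq' : q' ≠ 0)
    (hR : IsUnit R.det) (hR' : IsUnit R'.det)
    (hdet : |p * q * R.det| = 1) (hdet' : |p' * q' * R'.det| = 1) :
    iMap (p * p') (p * s' + s * q') (q * q') (R * R') =
      iMap p s q R * iMap p' s' q' R' ∧
    (iMap p s q R = iMap p' s' q' R' →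
      qMat p s q R = qMat p' s' q' R' ∨ qMat p s q R = -qMat p' s' q' R') := by
  refine ⟨iMap_mul p s q p' s' hq' R R', fun h => ?_⟩
  have hdet_eq : |(qMat p s q R).det| = |(qMat p' s' q' R').det| := by
    rw [det_qMat, det_qMat, hdet, hdet']
  have hdet_ne : (qMat p' s' q' R').det ≠ 0 := by
    rw [det_qMat]
    exact mul_ne_zero (mul_ne_zero hp' hq') hR'.ne_zero
  exact eq_or_eq_neg_of_eq_smul_of_abs_det_eq (qMat_eq_smul_of_iMap_eq hp hq hq' h) hdet_eq hdet_ne
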